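/- If the partition Y_1|Y_2|⋯|Y_l of (a subsystem of) an n-partite quantum system A_1A_2⋯A_n is coarser than the partition X_1|X_2|⋯|X_k (i.e., X_1|⋯|X_k ≻ Y_1|⋯|Y_l), then for every density operator ρ on H^{A_1}⊗⋯⊗H^{A_n} one has I(X_1:X_2:⋯:X_k) ≥ I(Y_1:Y_2:⋯:Y_l). -/

import Mathlib

open scoped BigOperators ComplexOrder
open Matrix

noncomputable section

/-- The function `x ↦ -x·log₂ x` (with the convention `0·log₂ 0 = 0`). -/
def negxlog2 (x : ℝ) : ℝ := -(x * Real.logb 2 x)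

/-- The von Neumann entropy (base 2), `S(ρ) = -Tr(ρ log₂ ρ)`, computed as the sum of
`-λ log₂ λ` over the eigenvalues of a Hermitian matrix (junk value `0` otherwise). -/
def vnEntropy {n : Type} [Fintype n] [DecidableEq n] (ρ : Matrix n n ℂ) : ℝ :=
  if h : ρ.IsHermitian then ∑ i, negxlog2 (h.eigenvalues i) else 0

/-- The Tsallis q-entropy `S_q(ρ) = (1 - Tr ρ^q)/(q-1)`, computed via eigenvalues. -/
def tsallisEntropy (q : ℝ) {n : Type} [Fintype n] [DecidableEq n] (ρ : Matrix n n ℂ) : ℝ :=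
  if h : ρ.IsHermitian then (1 - ∑ i, (h.eigenvalues i) ^ q) / (q - 1) else 0

/-- A density operator: positive semidefinite with unit trace. -/
def IsDensity {n : Type} [Fintype n] [DecidableEq n] (ρ : Matrix n n ℂ) : Prop :=
  ρ.PosSemidef ∧ ρ.trace = 1

/-- rank-one projection `|ψ⟩⟨ψ|`. -/
def outer {α : Type} (ψ : α → ℂ) : Matrix α α ℂ :=
  fun a b => ψ a * (starRingEnd ℂ) (ψ b)

section multi

variable {ι : Type} [Fintype ι] [DecidableEq ι] {d : ι → Type}
  [∀ i, Fintype (d i)] [∀ i, DecidableEq (d i)]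

/-- Combine an assignment of basis indices on the parties in `s` with one on the
complementary parties. -/
def combine (s : Finset ι) (x : (i : {j // j ∈ s}) → d i.1) (z : (i : {j // j ∉ s}) → d i.1)
    (i : ι) : d i :=
  if h : i ∈ s then x ⟨i, h⟩ else z ⟨i, h⟩

/-- The reduced state on the parties in `s`: partial trace over the complementary parties. -/
def pTr (ρ : Matrix (∀ i, d i) (∀ i, d i) ℂ) (s : Finset ι) :
    Matrix ((i : {j // j ∈ s}) → d i.1) ((i : {j // j ∈ s}) → d i.1) ℂ :=
  fun x y => ∑ z : (i : {j // j ∉ s}) → d i.1, ρ (combine s x z) (combine s y z)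

/-- von Neumann entropy of the reduced state on `s`. -/
def Sv (ρ : Matrix (∀ i, d i) (∀ i, d i) ℂ) (s : Finset ι) : ℝ := vnEntropy (pTr ρ s)

/-- Tsallis q-entropy of the reduced state on `s`. -/
def Sq (q : ℝ) (ρ : Matrix (∀ i, d i) (∀ i, d i) ℂ) (s : Finset ι) : ℝ :=
  tsallisEntropy q (pTr ρ s)

/-- Multipartite quantum mutual information `I(X₁:⋯:X_k) = Σ_s S(X_s) - S(X₁⋯X_k)` of a
partition `P` (each block a finset of parties, treated as a single party). -/
def MI (ρ : Matrix (∀ i, d i) (∀ i, d i) ℂ) (P : Finset (Finset ι)) : ℝ :=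
  (∑ X ∈ P, Sv ρ X) - Sv ρ (P.sup id)

/-- Dual multipartite quantum mutual information
`I'(X₁:⋯:X_k) = Σ_s S(X̄_s) - (k-1) S(X₁⋯X_k)`, where `X̄_s` is the union of all blocks
other than `X_s`. -/
def MI' (ρ : Matrix (∀ i, d i) (∀ i, d i) ℂ) (P : Finset (Finset ι)) : ℝ :=
  (∑ X ∈ P, Sv ρ (P.sup id \ X)) - ((P.card : ℝ) - 1) * Sv ρ (P.sup id)

/-- Tsallis multipartite quantum mutual information. -/
def MIq (q : ℝ) (ρ : Matrix (∀ i, d i) (∀ i, d i) ℂ) (P : Finset (Finset ι)) : ℝ :=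
  (∑ X ∈ P, Sq q ρ X) - Sq q ρ (P.sup id)

/-- Tsallis dual multipartite quantum mutual information. -/
def MIq' (q : ℝ) (ρ : Matrix (∀ i, d i) (∀ i, d i) ℂ) (P : Finset (Finset ι)) : ℝ :=
  (∑ X ∈ P, Sq q ρ (P.sup id \ X)) - ((P.card : ℝ) - 1) * Sq q ρ (P.sup id)

/-- The finest partition of the set `s` of parties: each party its own block. -/
def finest (s : Finset ι) : Finset (Finset ι) := s.image fun i => {i}

end multi

/-- A partition (of a subsystem): nonempty pairwise disjoint blocks. -/
def IsPartition {ι : Type} [DecidableEq ι] (P : Finset (Finset ι)) : Prop :=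
  (∀ X ∈ P, X.Nonempty) ∧ (P : Set (Finset ι)).PairwiseDisjoint id

/-- One coarsening step: (a) discarding whole blocks, (b) merging blocks into one block,
(c) discarding some parties from within a block containing at least two parties. -/
inductive CoarserStep {ι : Type} [DecidableEq ι] : Finset (Finset ι) → Finset (Finset ι) → Prop
  | discard {P Q : Finset (Finset ι)} (hQP : Q ⊆ P) (hQ : Q.Nonempty) : CoarserStep P Q
  | merge (P T : Finset (Finset ι)) (hT : T ⊆ P) (hT' : T.Nonempty) :
      CoarserStep P (insert (T.sup id) (P \ T))
  | shrink (P : Finset (Finset ι)) (X X' : Finset ι) (hX : X ∈ P) (h2 : 2 ≤ X.card)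
      (hsub : X' ⊆ X) (hne : X'.Nonempty) : CoarserStep P (insert X' (P.erase X))

/-- `Coarser P Q` : the partition `Q` is coarser than `P` (`P ≻ Q`). -/
def Coarser {ι : Type} [DecidableEq ι] (P Q : Finset (Finset ι)) : Prop :=
  Relation.ReflTransGen CoarserStep P Q

end

/-!
Strong subadditivity says that `s ↦ S(ρˢ)` is submodular on sets of parties, and `S(∅) = 0`. Hence
the entropy of a union of disjoint blocks is at most the sum of their entropies, which handles
discarding and merging blocks; shrinking a block `X` to `X'` next to the rest `R` is the
submodularity inequality for `X` and `X' ∪ R`.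

Strong subadditivity follows from monotonicity of the relative entropy `D(ρ‖σ)` under restriction of
the states to a subalgebra, applied to `ρ` and `ρ^{BC} ⊗ 1`. With `L` and `R` for left and right
multiplication, `D(ρ‖σ)` is the limit of `∫₀ᵀ ⟪ρ, (R_σ + t L_ρ)⁻¹ ρ⟫ dt - Tr ρ · log T` as `T → ∞`.
The integrand is the maximum over `Y` of `2 ⟪Y, ρ⟫ - ⟪Y, Yσ + tρY⟫`, and for `Y` in the subalgebra
this functional depends only on the restrictions of `ρ` and `σ`: restricting the states amounts to
maximising over a smaller set.
-/

open scoped Kronecker MatrixOrder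

section JointSpectrum

variable {n : Type*} [Fintype n] [DecidableEq n] {ρ σ : Matrix n n ℂ}

/-- The unitary matrix `⟪uᵢ, wⱼ⟫` of inner products between the eigenbases of `ρ` and `σ`. -/
noncomputable def eigenOverlap (hρ : ρ.IsHermitian) (hσ : σ.IsHermitian) : Matrix n n ℂ :=
  star hρ.eigenvectorUnitary.1 * hσ.eigenvectorUnitary.1

/-- The double operator integral `∑ᵢⱼ F pᵢ qⱼ ⟪uᵢ, wⱼ⟫ |uᵢ⟩⟨wⱼ|`, where `(pᵢ, uᵢ)` and `(qⱼ, wⱼ)`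
are the eigenpairs of `ρ` and `σ`. It is `F(L_ρ, R_σ)` applied to the identity, `L_ρ` and `R_σ`
being the commuting operators of left multiplication by `ρ` and right multiplication by `σ`. -/
noncomputable def doubleOperatorIntegral (hρ : ρ.IsHermitian) (hσ : σ.IsHermitian)
    (F : ℝ → ℝ → ℝ) : Matrix n n ℂ :=
  hρ.eigenvectorUnitary.1 *
    of (fun i j => (F (hρ.eigenvalues i) (hσ.eigenvalues j) : ℂ) * eigenOverlap hρ hσ i j) *
    star hσ.eigenvectorUnitary.1

/-- The sum of `F` over pairs of eigenvalues of `ρ` and `σ`, weighted by the squared overlaps of the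
eigenvectors (the Nussbaum–Szkoła weights). It turns traces into scalar sums. -/
noncomputable def jointSpectralSum (hρ : ρ.IsHermitian) (hσ : σ.IsHermitian)
    (F : ℝ → ℝ → ℝ) : ℝ :=
  ∑ i, ∑ j, Complex.normSq (eigenOverlap hρ hσ i j) * F (hρ.eigenvalues i) (hσ.eigenvalues j)

variable (hρ : ρ.IsHermitian) (hσ : σ.IsHermitian) (F G : ℝ → ℝ → ℝ) (f g : ℝ → ℝ)

theorem cfc_eq_mul_diagonal_mul_star :
    cfc f ρ = hρ.eigenvectorUnitary.1 * diagonal (fun i => (f (hρ.eigenvalues i) : ℂ)) *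
      star hρ.eigenvectorUnitary.1 := by
  rw [hρ.cfc_eq, IsHermitian.cfc, Unitary.conjStarAlgAut_apply]
  rfl

theorem mul_cfc_eq_cfc (hρ : ρ.IsHermitian) (f : ℝ → ℝ) :
    ρ * cfc f ρ = cfc (fun x => x * f x) ρ := by
  rw [cfc_mul _ _ ρ (ρ.finite_real_spectrum.continuousOn _)
    (ρ.finite_real_spectrum.continuousOn _), cfc_id' ℝ ρ hρ.isSelfAdjoint]

theorem cfc_mul_doubleOperatorIntegral :
    cfc f ρ * doubleOperatorIntegral hρ hσ F =
      doubleOperatorIntegral hρ hσ (fun x y => f x * F x y) := by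
  have hU := Unitary.star_mul_self_of_mem hρ.eigenvectorUnitary.2
  rw [cfc_eq_mul_diagonal_mul_star hρ, doubleOperatorIntegral, Matrix.mul_assoc _ (star _),
    ← Matrix.mul_assoc (star _), ← Matrix.mul_assoc (star _), hU, Matrix.one_mul,
    ← Matrix.mul_assoc, Matrix.mul_assoc _ (diagonal _), doubleOperatorIntegral]
  congr 2
  ext i j
  simp only [diagonal_mul, of_apply, Complex.ofReal_mul, mul_assoc]

theorem doubleOperatorIntegral_mul_cfc :
    doubleOperatorIntegral hρ hσ F * cfc f σ =
      doubleOperatorIntegral hρ hσ (fun x y => F x y * f y) := by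
  have hW := Unitary.star_mul_self_of_mem hσ.eigenvectorUnitary.2
  rw [cfc_eq_mul_diagonal_mul_star hσ, doubleOperatorIntegral, Matrix.mul_assoc _ (star _),
    ← Matrix.mul_assoc (star _), ← Matrix.mul_assoc (star _), hW, Matrix.one_mul,
    ← Matrix.mul_assoc, Matrix.mul_assoc _ _ (diagonal _), doubleOperatorIntegral]
  congr 2
  ext i j
  simp only [mul_diagonal, of_apply, Complex.ofReal_mul]
  ring

theorem doubleOperatorIntegral_one : doubleOperatorIntegral hρ hσ (fun _ _ => 1) = 1 := by
  have hU := Unitary.mul_star_self_of_mem hρ.eigenvectorUnitary.2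
  have hW := Unitary.mul_star_self_of_mem hσ.eigenvectorUnitary.2
  have hof : of (fun i j => ((1 : ℝ) : ℂ) * eigenOverlap hρ hσ i j) = eigenOverlap hρ hσ := by
    ext i j
    simp
  rw [doubleOperatorIntegral, hof, eigenOverlap, ← Matrix.mul_assoc, hU, Matrix.one_mul, hW]

theorem doubleOperatorIntegral_add :
    doubleOperatorIntegral hρ hσ (fun x y => F x y + G x y) =
      doubleOperatorIntegral hρ hσ F + doubleOperatorIntegral hρ hσ G := by
  simp only [doubleOperatorIntegral, ← Matrix.mul_add, ← Matrix.add_mul]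
  congr 2
  ext i j
  simp [add_mul]

variable {F G} in
theorem doubleOperatorIntegral_congr
    (h : ∀ i j, F (hρ.eigenvalues i) (hσ.eigenvalues j) = G (hρ.eigenvalues i) (hσ.eigenvalues j)) :
    doubleOperatorIntegral hρ hσ F = doubleOperatorIntegral hρ hσ G := by
  simp only [doubleOperatorIntegral, h]

theorem doubleOperatorIntegral_left :
    doubleOperatorIntegral hρ hσ (fun x _ => f x) = cfc f ρ := by
  simpa only [doubleOperatorIntegral_one, mul_one] using
    (cfc_mul_doubleOperatorIntegral hρ hσ (fun _ _ => 1) f).symm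

theorem doubleOperatorIntegral_right :
    doubleOperatorIntegral hρ hσ (fun _ y => f y) = cfc f σ := by
  simpa only [doubleOperatorIntegral_one, one_mul] using
    (doubleOperatorIntegral_mul_cfc hρ hσ (fun _ _ => 1) f).symm

theorem trace_conjTranspose_mul_doubleOperatorIntegral :
    ((doubleOperatorIntegral hρ hσ F)ᴴ * doubleOperatorIntegral hρ hσ G).trace.re =
      jointSpectralSum hρ hσ (fun x y => F x y * G x y) := by
  have hU := Unitary.star_mul_self_of_mem hρ.eigenvectorUnitary.2
  have hW := Unitary.star_mul_self_of_mem hσ.eigenvectorUnitary.2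
  rw [doubleOperatorIntegral, doubleOperatorIntegral, ← star_eq_conjTranspose, StarMul.star_mul,
    StarMul.star_mul, star_star, trace_mul_comm, Matrix.mul_assoc _ (star _),
    ← Matrix.mul_assoc (star _), hW, Matrix.one_mul, Matrix.mul_assoc, trace_mul_comm,
    ← Matrix.mul_assoc, Matrix.mul_assoc _ (star _), hU, Matrix.mul_one, trace_mul_comm]
  simp only [trace, diag_apply, mul_apply, star_apply, of_apply]
  rw [Finset.sum_comm]
  simp only [jointSpectralSum, Complex.re_sum]
  refine Finset.sum_congr rfl fun i _ => Finset.sum_congr rfl fun j _ => ?_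
  have hoverlap : (starRingEnd ℂ) (eigenOverlap hρ hσ i j) * eigenOverlap hρ hσ i j =
      (Complex.normSq (eigenOverlap hρ hσ i j) : ℂ) :=
    Complex.normSq_eq_conj_mul_self.symm
  rw [star_mul', Complex.star_def, Complex.conj_ofReal, mul_mul_mul_comm, hoverlap,
    ← Complex.ofReal_mul, ← Complex.ofReal_mul, Complex.ofReal_re, mul_comm]

theorem trace_cfc_mul_cfc :
    (cfc f ρ * cfc g σ).trace.re = jointSpectralSum hρ hσ (fun x y => f x * g y) := by
  have hf : (cfc f ρ)ᴴ = cfc f ρ := cfc_predicate f ρ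
  rw [← trace_conjTranspose_mul_doubleOperatorIntegral hρ hσ (fun x _ => f x) (fun _ y => g y),
    doubleOperatorIntegral_left, doubleOperatorIntegral_right, hf]

theorem trace_eq_jointSpectralSum : ρ.trace.re = jointSpectralSum hρ hσ (fun x _ => x) := by
  simpa [cfc_id' ℝ ρ hρ.isSelfAdjoint, cfc_const_one ℝ σ hσ.isSelfAdjoint] using
    trace_cfc_mul_cfc hρ hσ (fun x => x) (fun _ => 1)

theorem jointSpectralSum_sub :
    jointSpectralSum hρ hσ (fun x y => F x y - G x y) =
      jointSpectralSum hρ hσ F - jointSpectralSum hρ hσ G := by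
  simp only [jointSpectralSum, mul_sub, Finset.sum_sub_distrib]

theorem jointSpectralSum_mul_const (c : ℝ) :
    jointSpectralSum hρ hσ (fun x y => F x y * c) = jointSpectralSum hρ hσ F * c := by
  simp only [jointSpectralSum, ← mul_assoc, Finset.sum_mul]

/-- The support of `ρ` is contained in that of `σ`, in the form `ker σ ⊆ ker ρ`, with kernel vectors
collected into the columns of a matrix `Z`. -/
def SupportLE (ρ σ : Matrix n n ℂ) : Prop := ∀ Z : Matrix n n ℂ, σ * Z = 0 → ρ * Z = 0

theorem mul_eigenOverlap_eq_zero_of_doubleOperatorIntegral_eq_zero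
    (hF : doubleOperatorIntegral hρ hσ F = 0) (i j : n) :
    (F (hρ.eigenvalues i) (hσ.eigenvalues j) : ℂ) * eigenOverlap hρ hσ i j = 0 := by
  have hU := Unitary.star_mul_self_of_mem hρ.eigenvectorUnitary.2
  have hW := Unitary.star_mul_self_of_mem hσ.eigenvectorUnitary.2
  have hconj := congr(star hρ.eigenvectorUnitary.1 * $hF * hσ.eigenvectorUnitary.1)
  rw [doubleOperatorIntegral, Matrix.mul_assoc _ _ (star _), ← Matrix.mul_assoc (star _), hU,
    Matrix.one_mul, Matrix.mul_assoc, hW, Matrix.mul_one, Matrix.mul_zero, Matrix.zero_mul] at hconj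
  exact congr_fun₂ hconj i j

theorem SupportLE.eigenvalues_eq_zero_or_eigenOverlap_eq_zero (h : SupportLE ρ σ) {i j : n}
    (hj : hσ.eigenvalues j = 0) : hρ.eigenvalues i = 0 ∨ eigenOverlap hρ hσ i j = 0 := by
  let atZero : ℝ → ℝ := fun y => if y = 0 then 1 else 0
  have hker : σ * cfc atZero σ = 0 := by
    have hzero : (fun y => y * atZero y) = fun _ => 0 := by
      ext y
      by_cases hy : y = 0 <;> simp [atZero, hy]
    rw [mul_cfc_eq_cfc hσ, hzero, cfc_const_zero]
  have hzero : doubleOperatorIntegral hρ hσ (fun x y => x * atZero y) = 0 := by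
    rw [← cfc_mul_doubleOperatorIntegral, doubleOperatorIntegral_right,
      cfc_id' ℝ ρ hρ.isSelfAdjoint]
    exact h _ hker
  simpa [atZero, hj] using
    mul_eigenOverlap_eq_zero_of_doubleOperatorIntegral_eq_zero hρ hσ _ hzero i j

end JointSpectrum

section Variational

variable {n : Type*} [Fintype n] {ρ σ : Matrix n n ℂ} {t : ℝ}

/-- The weighted Sylvester operator `Y ↦ Yσ + t ρY`. -/
noncomputable def sylvester (t : ℝ) (ρ σ : Matrix n n ℂ) : Matrix n n ℂ →ₗ[ℝ] Matrix n n ℂ :=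
  LinearMap.mulRight ℝ σ + t • LinearMap.mulLeft ℝ ρ

theorem trace_conjTranspose_mul_sylvester (Y Z : Matrix n n ℂ) :
    (Yᴴ * sylvester t ρ σ Z).trace.re =
      (Yᴴ * (Z * σ)).trace.re + t * (Yᴴ * (ρ * Z)).trace.re := by
  simp [sylvester, Matrix.mul_add]

/-- The concave quadratic functional `Y ↦ 2 ⟪Y, ρ⟫ - ⟪Y, Yσ + t ρY⟫`, maximised at the solution of
the Sylvester equation `Yσ + t ρY = ρ`. -/
noncomputable def sylvesterFunctional (t : ℝ) (ρ σ Y : Matrix n n ℂ) : ℝ :=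
  2 * (Yᴴ * ρ).trace.re - (Yᴴ * sylvester t ρ σ Y).trace.re

theorem re_trace_conjTranspose (A : Matrix n n ℂ) : Aᴴ.trace.re = A.trace.re := by
  simp [trace_conjTranspose]

theorem trace_conjTranspose_mul_sylvester_comm (hρ : ρ.IsHermitian) (hσ : σ.IsHermitian)
    (Y Z : Matrix n n ℂ) :
    (Yᴴ * sylvester t ρ σ Z).trace.re = (Zᴴ * sylvester t ρ σ Y).trace.re := by
  have hright : (Yᴴ * (Z * σ))ᴴ.trace.re = (Zᴴ * (Y * σ)).trace.re := by
    simp only [conjTranspose_mul, conjTranspose_conjTranspose, hσ.eq]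
    rw [Matrix.mul_assoc, trace_mul_comm, Matrix.mul_assoc]
  have hleft : (Yᴴ * (ρ * Z))ᴴ.trace.re = (Zᴴ * (ρ * Y)).trace.re := by
    simp only [conjTranspose_mul, conjTranspose_conjTranspose, hρ.eq, Matrix.mul_assoc]
  rw [trace_conjTranspose_mul_sylvester, trace_conjTranspose_mul_sylvester, ← hright, ← hleft,
    re_trace_conjTranspose, re_trace_conjTranspose]

theorem trace_conjTranspose_mul_sylvester_self_nonneg (ht : 0 ≤ t) (hρ : ρ.PosSemidef)
    (hσ : σ.PosSemidef) (Y : Matrix n n ℂ) : 0 ≤ (Yᴴ * sylvester t ρ σ Y).trace.re := by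
  have hright : 0 ≤ (Yᴴ * (Y * σ)).trace.re := by
    rw [trace_mul_comm]
    exact (Complex.le_def.1 (hσ.mul_mul_conjTranspose_same Y).trace_nonneg).1
  have hleft : 0 ≤ (Yᴴ * (ρ * Y)).trace.re := by
    rw [← Matrix.mul_assoc]
    exact (Complex.le_def.1 (hρ.conjTranspose_mul_mul_same Y).trace_nonneg).1
  rw [trace_conjTranspose_mul_sylvester]
  positivity

theorem sylvesterFunctional_le (ht : 0 ≤ t) (hρ : ρ.PosSemidef) (hσ : σ.PosSemidef)
    {Y₀ : Matrix n n ℂ} (hY₀ : sylvester t ρ σ Y₀ = ρ) (Y : Matrix n n ℂ) :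
    sylvesterFunctional t ρ σ Y ≤ sylvesterFunctional t ρ σ Y₀ := by
  have hsq := trace_conjTranspose_mul_sylvester_self_nonneg ht hρ hσ (Y - Y₀)
  have hcomm := trace_conjTranspose_mul_sylvester_comm (t := t) hρ.1 hσ.1 Y₀ Y
  simp only [map_sub, hY₀, conjTranspose_sub, Matrix.sub_mul, Matrix.mul_sub, trace_sub,
    Complex.sub_re] at hsq hcomm
  simp only [sylvesterFunctional, hY₀]
  linarith

variable [DecidableEq n]

theorem sylvester_doubleOperatorIntegral (hρ : ρ.IsHermitian) (hσ : σ.IsHermitian)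
    (F : ℝ → ℝ → ℝ) :
    sylvester t ρ σ (doubleOperatorIntegral hρ hσ F) =
      doubleOperatorIntegral hρ hσ (fun x y => F x y * y + t * x * F x y) := by
  rw [doubleOperatorIntegral_add, ← doubleOperatorIntegral_mul_cfc hρ hσ F (fun y => y),
    ← cfc_mul_doubleOperatorIntegral hρ hσ F (fun x => t * x), cfc_id' ℝ σ hσ.isSelfAdjoint,
    cfc_const_mul_id t ρ hρ.isSelfAdjoint, smul_mul_assoc]
  rfl

theorem sylvester_doubleOperatorIntegral_div (ht : 0 < t) (hρ : ρ.PosSemidef)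
    (hσ : σ.PosSemidef) :
    sylvester t ρ σ (doubleOperatorIntegral hρ.1 hσ.1 (fun x y => x / (y + t * x))) = ρ := by
  rw [sylvester_doubleOperatorIntegral]
  refine (doubleOperatorIntegral_congr _ _ fun i j => ?_).trans
    ((doubleOperatorIntegral_left hρ.1 hσ.1 (fun x => x)).trans (cfc_id' ℝ ρ hρ.1.isSelfAdjoint))
  have hx := hρ.eigenvalues_nonneg i
  have hy := hσ.eigenvalues_nonneg j
  rcases hx.eq_or_lt with hx | hx
  · simp [← hx]
  · field_simp

theorem isGreatest_sylvesterFunctional (ht : 0 < t) (hρ : ρ.PosSemidef) (hσ : σ.PosSemidef) :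
    IsGreatest (Set.range (sylvesterFunctional t ρ σ))
      (jointSpectralSum hρ.1 hσ.1 (fun x y => x / (y + t * x) * x)) := by
  set Y₀ := doubleOperatorIntegral hρ.1 hσ.1 (fun x y => x / (y + t * x))
  have hY₀ : sylvester t ρ σ Y₀ = ρ := sylvester_doubleOperatorIntegral_div ht hρ hσ
  have hval : sylvesterFunctional t ρ σ Y₀ =
      jointSpectralSum hρ.1 hσ.1 (fun x y => x / (y + t * x) * x) := by
    rw [← trace_conjTranspose_mul_doubleOperatorIntegral, doubleOperatorIntegral_left,
      cfc_id' ℝ ρ hρ.1.isSelfAdjoint, sylvesterFunctional, hY₀]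
    ring
  exact hval ▸ ⟨⟨Y₀, rfl⟩, Set.forall_mem_range.2 (sylvesterFunctional_le ht.le hρ hσ hY₀)⟩

end Variational

section Marginal

theorem mul_eq_zero_iff_trace_eq_zero {n : Type*} [Fintype n] {ρ : Matrix n n ℂ}
    (hρ : ρ.PosSemidef) (Z : Matrix n n ℂ) :
    ρ * Z = 0 ↔ (Z * Zᴴ * ρ).trace = 0 := by
  classical
  obtain ⟨B, rfl⟩ := CStarAlgebra.nonneg_iff_eq_star_mul_self.mp hρ.nonneg
  have hconj : (Z * Zᴴ * (star B * B)).trace = ((B * Z)ᴴ * (B * Z)).trace := by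
    rw [Matrix.mul_assoc, trace_mul_comm, conjTranspose_mul, star_eq_conjTranspose]
    simp only [Matrix.mul_assoc]
  rw [hconj, trace_conjTranspose_mul_self_eq_zero_iff, star_eq_conjTranspose,
    conjTranspose_mul_self_mul_eq_zero]

variable {n m : Type*} [Fintype n] [DecidableEq n] [Fintype m] [DecidableEq m]

/-- `ρ'` is the restriction of the functional `Z ↦ Tr(Zρ)` along the star homomorphism `Λ`. For the
embedding `Z ↦ Z ⊗ 1` of a subsystem this says that `ρ'` is the reduced state of `ρ`. -/
def IsMarginal (Λ : Matrix m m ℂ →⋆ₐ[ℂ] Matrix n n ℂ) (ρ : Matrix n n ℂ) (ρ' : Matrix m m ℂ) :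
    Prop :=
  ∀ Z, (Λ Z * ρ).trace = (Z * ρ').trace

theorem map_posSemidef (Λ : Matrix m m ℂ →⋆ₐ[ℂ] Matrix n n ℂ) {β : Matrix m m ℂ}
    (hβ : β.PosSemidef) : (Λ β).PosSemidef := by
  obtain ⟨B, rfl⟩ := CStarAlgebra.nonneg_iff_eq_star_mul_self.mp hβ.nonneg
  rw [map_mul, map_star]
  exact posSemidef_conjTranspose_mul_self (Λ B)

namespace IsMarginal

variable {Λ : Matrix m m ℂ →⋆ₐ[ℂ] Matrix n n ℂ} {ρ σ : Matrix n n ℂ} {ρ' σ' β : Matrix m m ℂ}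

theorem trace_eq (h : IsMarginal Λ ρ ρ') : ρ.trace = ρ'.trace := by
  simpa using h 1

theorem isHermitian (h : IsMarginal Λ ρ ρ') (hρ : ρ.IsHermitian) : ρ'.IsHermitian := by
  refine ext_iff_trace_mul_left.2 fun Z => ?_
  have hadj := congr(star $(h (star Z)))
  rw [map_star, ← trace_conjTranspose, ← trace_conjTranspose, conjTranspose_mul, conjTranspose_mul,
    ← star_eq_conjTranspose (star _), star_star, ← star_eq_conjTranspose (star _), star_star,
    hρ.eq, trace_mul_comm, trace_mul_comm _ Z, h] at hadj
  exact hadj.symm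

theorem posSemidef (h : IsMarginal Λ ρ ρ') (hρ : ρ.PosSemidef) : ρ'.PosSemidef := by
  refine .of_dotProduct_mulVec_nonneg (h.isHermitian hρ.1) fun x => ?_
  have hsq : 0 ≤ (Λ (vecMulVec x (star x)) * ρ).trace := by
    obtain ⟨B, hB⟩ := CStarAlgebra.nonneg_iff_eq_star_mul_self.mp
      (map_posSemidef Λ (posSemidef_vecMulVec_self_star x)).nonneg
    rw [hB, Matrix.mul_assoc, trace_mul_comm]
    exact (hρ.mul_mul_conjTranspose_same B).trace_nonneg
  rw [h, trace_mul_comm, mul_vecMulVec, trace_vecMulVec, dotProduct_comm] at hsq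
  exact hsq

theorem mul_map_eq_zero_iff (h : IsMarginal Λ ρ ρ') (hρ : ρ.PosSemidef) (Z : Matrix m m ℂ) :
    ρ * Λ Z = 0 ↔ ρ' * Z = 0 := by
  rw [mul_eq_zero_iff_trace_eq_zero hρ, mul_eq_zero_iff_trace_eq_zero (h.posSemidef hρ), ← h,
    map_mul, ← star_eq_conjTranspose, ← star_eq_conjTranspose, map_star]

theorem supportLE (hρ' : IsMarginal Λ ρ ρ') (hσ' : IsMarginal Λ σ σ') (hρ : ρ.PosSemidef)
    (hσ : σ.PosSemidef) (hsupp : SupportLE ρ σ) : SupportLE ρ' σ' := fun Z hZ =>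
  (hρ'.mul_map_eq_zero_iff hρ Z).1 (hsupp _ ((hσ'.mul_map_eq_zero_iff hσ Z).2 hZ))

theorem supportLE_map (h : IsMarginal Λ ρ β) (hρ : ρ.PosSemidef) : SupportLE ρ (Λ β) := by
  intro Z hZ
  have hβ : IsSelfAdjoint β := (h.posSemidef hρ).1
  have hcont (f : ℝ → ℝ) : ContinuousOn f (spectrum ℝ β) := β.finite_real_spectrum.continuousOn f
  have hinv : β * (cfc (·⁻¹ : ℝ → ℝ) β * β) = β := by
    have hmul : cfc (fun x : ℝ => x * (x⁻¹ * x)) β = β := by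
      simpa only [← mul_assoc, mul_inv_mul_cancel] using cfc_id' ℝ β
    rwa [cfc_mul _ _ β (hcont _) (hcont _), cfc_mul _ _ β (hcont _) (hcont _), cfc_id' ℝ β] at hmul
  have hker : ρ * Λ (1 - cfc (·⁻¹ : ℝ → ℝ) β * β) = 0 :=
    (h.mul_map_eq_zero_iff hρ _).2 (by rw [Matrix.mul_sub, Matrix.mul_one, hinv, sub_self])
  have hfactor : ρ = ρ * Λ (cfc (·⁻¹ : ℝ → ℝ) β) * Λ β := by
    rwa [map_sub, map_one, map_mul, Matrix.mul_sub, Matrix.mul_one, sub_eq_zero,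
      ← Matrix.mul_assoc] at hker
  rw [hfactor, Matrix.mul_assoc, hZ, Matrix.mul_zero]

theorem sylvesterFunctional_map (hρ' : IsMarginal Λ ρ ρ') (hσ' : IsMarginal Λ σ σ') (t : ℝ)
    (Y : Matrix m m ℂ) :
    sylvesterFunctional t ρ σ (Λ Y) = sylvesterFunctional t ρ' σ' Y := by
  have hstar : (Λ Y)ᴴ = Λ Yᴴ := (map_star Λ Y).symm
  have hlin : ((Λ Y)ᴴ * ρ).trace = (Yᴴ * ρ').trace := by rw [hstar, hρ']
  have hright : ((Λ Y)ᴴ * (Λ Y * σ)).trace = (Yᴴ * (Y * σ')).trace := by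
    rw [hstar, ← Matrix.mul_assoc, ← map_mul, hσ', Matrix.mul_assoc]
  have hleft : ((Λ Y)ᴴ * (ρ * Λ Y)).trace = (Yᴴ * (ρ' * Y)).trace := by
    rw [← Matrix.mul_assoc, trace_mul_comm, hstar, ← Matrix.mul_assoc, ← map_mul, hρ',
      Matrix.mul_assoc, trace_mul_comm Y, Matrix.mul_assoc]
  simp only [sylvesterFunctional, trace_conjTranspose_mul_sylvester, hlin, hright, hleft]

theorem jointSpectralSum_le (hρ' : IsMarginal Λ ρ ρ') (hσ' : IsMarginal Λ σ σ')
    (hρ : ρ.PosSemidef) (hσ : σ.PosSemidef) {t : ℝ} (ht : 0 < t) :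
    jointSpectralSum (hρ'.isHermitian hρ.1) (hσ'.isHermitian hσ.1)
        (fun x y => x / (y + t * x) * x) ≤
      jointSpectralSum hρ.1 hσ.1 (fun x y => x / (y + t * x) * x) := by
  obtain ⟨Y, hY⟩ :=
    (isGreatest_sylvesterFunctional ht (hρ'.posSemidef hρ) (hσ'.posSemidef hσ)).1
  rw [← hY, ← sylvesterFunctional_map hρ' hσ']
  exact (isGreatest_sylvesterFunctional ht hρ hσ).2 ⟨Λ Y, rfl⟩

end IsMarginal

end Marginal

section RelativeEntropy

open Filter Topology

variable {n : Type*} [Fintype n] [DecidableEq n]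

/-- Umegaki's relative entropy `Tr ρ (log ρ - log σ)`. Since `Real.log 0 = 0`, it has the usual
value only when the support of `ρ` is contained in that of `σ`. -/
noncomputable def relEntropy (ρ σ : Matrix n n ℂ) : ℝ :=
  (ρ * cfc Real.log ρ).trace.re - (ρ * cfc Real.log σ).trace.re

variable {ρ σ : Matrix n n ℂ}

theorem relEntropy_eq_jointSpectralSum (hρ : ρ.IsHermitian) (hσ : σ.IsHermitian) :
    relEntropy ρ σ = jointSpectralSum hρ hσ (fun x y => x * (Real.log x - Real.log y)) := by
  have hleft : (ρ * cfc Real.log ρ).trace.re =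
      jointSpectralSum hρ hσ (fun x _ => x * Real.log x) := by
    simpa [mul_cfc_eq_cfc hρ, cfc_const_one ℝ σ hσ.isSelfAdjoint] using
      trace_cfc_mul_cfc hρ hσ (fun x => x * Real.log x) (fun _ => 1)
  have hright : (ρ * cfc Real.log σ).trace.re =
      jointSpectralSum hρ hσ (fun x y => x * Real.log y) := by
    simpa only [cfc_id' ℝ ρ hρ.isSelfAdjoint] using
      trace_cfc_mul_cfc hρ hσ (fun x => x) Real.log
  simp only [relEntropy, hleft, hright, mul_sub, jointSpectralSum_sub]

/-- The primitive in `t` of the kernel `x² / (y + t x)` that vanishes at `t = 0`. -/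
noncomputable def logKernel (t x y : ℝ) : ℝ := x * (Real.log (y + t * x) - Real.log y)

theorem hasDerivAt_logKernel {x y t : ℝ} (h : y + t * x ≠ 0) :
    HasDerivAt (fun s => logKernel s x y) (x / (y + t * x) * x) t := by
  have hlin : HasDerivAt (fun s => y + s * x) x t := by
    simpa using ((hasDerivAt_id t).mul_const x).const_add y
  simpa only [logKernel, mul_comm] using ((hlin.log h).sub_const (Real.log y)).const_mul x

theorem tendsto_logKernel_sub_mul_log {x : ℝ} (hx : 0 ≤ x) (y : ℝ) :
    Tendsto (fun t => logKernel t x y - x * Real.log t) atTop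
      (𝓝 (x * (Real.log x - Real.log y))) := by
  rcases hx.eq_or_lt with rfl | hx
  · simp [logKernel]
  have harg : Tendsto (fun t => y / t + x) atTop (𝓝 x) := by
    simpa using (tendsto_const_nhds.div_atTop tendsto_id).add_const x
  refine (((harg.log hx.ne').sub_const (Real.log y)).const_mul x).congr' ?_
  filter_upwards [harg.eventually_ne hx.ne', eventually_gt_atTop 0] with t hne ht
  have hfactor : y + t * x = t * (y / t + x) := by field_simp
  rw [logKernel, hfactor, Real.log_mul ht.ne' hne]
  ring

theorem hasDerivAt_jointSpectralSum_logKernel (hρ : ρ.PosSemidef) (hσ : σ.PosSemidef)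
    (h : SupportLE ρ σ) {t : ℝ} (ht : 0 ≤ t) :
    HasDerivAt (fun s => jointSpectralSum hρ.1 hσ.1 (logKernel s))
      (jointSpectralSum hρ.1 hσ.1 (fun x y => x / (y + t * x) * x)) t := by
  refine HasDerivAt.fun_sum fun i _ => HasDerivAt.fun_sum fun j _ => ?_
  rcases (hρ.eigenvalues_nonneg i).eq_or_lt with hx | hx
  · simpa [logKernel, ← hx] using hasDerivAt_const t (0 : ℝ)
  rcases (hσ.eigenvalues_nonneg j).eq_or_lt with hy | hy
  · have hoverlap := (h.eigenvalues_eq_zero_or_eigenOverlap_eq_zero hρ.1 hσ.1 (i := i)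
      hy.symm).resolve_left hx.ne'
    simpa [hoverlap] using hasDerivAt_const t (0 : ℝ)
  · exact (hasDerivAt_logKernel (by positivity)).const_mul _

theorem tendsto_jointSpectralSum_logKernel_sub (hρ : ρ.PosSemidef) (hσ : σ.IsHermitian) :
    Tendsto (fun t => jointSpectralSum hρ.1 hσ (logKernel t) - ρ.trace.re * Real.log t)
      atTop (𝓝 (relEntropy ρ σ)) := by
  simp only [relEntropy_eq_jointSpectralSum hρ.1 hσ, trace_eq_jointSpectralSum hρ.1 hσ,
    ← jointSpectralSum_mul_const, ← jointSpectralSum_sub]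
  exact tendsto_finsetSum _ fun i _ => tendsto_finsetSum _ fun j _ =>
    (tendsto_logKernel_sub_mul_log (hρ.eigenvalues_nonneg i) _).const_mul _

namespace IsMarginal

variable {m : Type*} [Fintype m] [DecidableEq m] {Λ : Matrix m m ℂ →⋆ₐ[ℂ] Matrix n n ℂ}
  {ρ' σ' : Matrix m m ℂ}

theorem jointSpectralSum_logKernel_le (hρ' : IsMarginal Λ ρ ρ') (hσ' : IsMarginal Λ σ σ')
    (hρ : ρ.PosSemidef) (hσ : σ.PosSemidef) (hsupp : SupportLE ρ σ) {t : ℝ} (ht : 0 ≤ t) :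
    jointSpectralSum (hρ'.isHermitian hρ.1) (hσ'.isHermitian hσ.1) (logKernel t) ≤
      jointSpectralSum hρ.1 hσ.1 (logKernel t) := by
  let gap : ℝ → ℝ := fun s => jointSpectralSum hρ.1 hσ.1 (logKernel s) -
    jointSpectralSum (hρ'.isHermitian hρ.1) (hσ'.isHermitian hσ.1) (logKernel s)
  have hderiv (s : ℝ) (hs : 0 ≤ s) := (hasDerivAt_jointSpectralSum_logKernel hρ hσ hsupp hs).sub
    (hasDerivAt_jointSpectralSum_logKernel (hρ'.posSemidef hρ) (hσ'.posSemidef hσ)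
      (hρ'.supportLE hσ' hρ hσ hsupp) hs)
  have hmono : MonotoneOn gap (Set.Ici 0) := by
    refine monotoneOn_of_hasDerivWithinAt_nonneg (convex_Ici 0)
      (fun s hs => (hderiv s hs).continuousAt.continuousWithinAt)
      (fun s hs => (hderiv s (interior_subset hs)).hasDerivWithinAt) fun s hs => ?_
    rw [interior_Ici] at hs
    exact sub_nonneg.2 (hρ'.jointSpectralSum_le hσ' hρ hσ hs)
  simpa [gap, jointSpectralSum, logKernel] using hmono Set.self_mem_Ici ht ht

theorem relEntropy_le (hρ' : IsMarginal Λ ρ ρ') (hσ' : IsMarginal Λ σ σ')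
    (hρ : ρ.PosSemidef) (hσ : σ.PosSemidef) (hsupp : SupportLE ρ σ) :
    relEntropy ρ' σ' ≤ relEntropy ρ σ := by
  refine le_of_tendsto_of_tendsto
    (tendsto_jointSpectralSum_logKernel_sub (hρ'.posSemidef hρ) (hσ'.isHermitian hσ.1))
    (tendsto_jointSpectralSum_logKernel_sub hρ hσ.1) ?_
  filter_upwards [eventually_ge_atTop 0] with t ht
  rw [← hρ'.trace_eq]
  exact sub_le_sub_right (hρ'.jointSpectralSum_logKernel_le hσ' hρ hσ hsupp ht) _

end IsMarginal

end RelativeEntropy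

section Entropy

theorem vnEntropy_eq {n : Type} [Fintype n] [DecidableEq n] {ρ : Matrix n n ℂ}
    (hρ : ρ.IsHermitian) : vnEntropy ρ = -(ρ * cfc Real.log ρ).trace.re / Real.log 2 := by
  have htrace : (cfc (fun x => x * Real.log x) ρ).trace.re =
      ∑ i, hρ.eigenvalues i * Real.log (hρ.eigenvalues i) := by
    rw [cfc_eq_mul_diagonal_mul_star hρ, Matrix.mul_assoc, trace_mul_comm, Matrix.mul_assoc,
      Unitary.star_mul_self_of_mem hρ.eigenvectorUnitary.2, Matrix.mul_one, trace_diagonal]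
    simp
  rw [vnEntropy, dif_pos hρ, mul_cfc_eq_cfc hρ, htrace, neg_div, Finset.sum_div,
    ← Finset.sum_neg_distrib]
  simp only [negxlog2, Real.logb, mul_div_assoc]

theorem vnEntropy_of_unique {n : Type} [Unique n] [Fintype n] [DecidableEq n] {ρ : Matrix n n ℂ}
    (hρ : IsDensity ρ) : vnEntropy ρ = 0 := by
  obtain ⟨hpos, htrace⟩ := hρ
  have heigenvalue : hpos.1.eigenvalues default = 1 := by
    rw [hpos.1.trace_eq_sum_eigenvalues, Fintype.sum_unique] at htrace
    exact Complex.ofReal_eq_one.1 htrace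
  rw [vnEntropy, dif_pos hpos.1, Fintype.sum_unique, heigenvalue, negxlog2, Real.logb_one,
    mul_zero, neg_zero]

theorem relEntropy_map {n m : Type} [Fintype n] [DecidableEq n] [Fintype m] [DecidableEq m]
    {Λ : Matrix m m ℂ →⋆ₐ[ℂ] Matrix n n ℂ} {ρ : Matrix n n ℂ} {β : Matrix m m ℂ}
    (h : IsMarginal Λ ρ β) (hρ : ρ.IsHermitian) :
    relEntropy ρ (Λ β) = (vnEntropy β - vnEntropy ρ) * Real.log 2 := by
  have hβ := h.isHermitian hρ
  have hΛ : Continuous Λ := Λ.toAlgHom.toLinearMap.continuous_of_finiteDimensional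
  have hmap : Λ (cfc Real.log β) = cfc Real.log (Λ β) :=
    Λ.map_cfc Real.log β (β.finite_real_spectrum.continuousOn _) hΛ hβ.isSelfAdjoint
      (hβ.isSelfAdjoint.map Λ)
  have hcross : (ρ * cfc Real.log (Λ β)).trace = (β * cfc Real.log β).trace := by
    rw [← hmap, trace_mul_comm, h, trace_mul_comm]
  have hlog2 : Real.log 2 ≠ 0 := (Real.log_pos one_lt_two).ne'
  rw [relEntropy, hcross, vnEntropy_eq hρ, vnEntropy_eq hβ]
  field_simp
  ring

/-- The algebras indexed by `a`, `b`, `c` play the roles of those of the subsystems `AB`, `B`, `BC`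
of `ABC`, and `hcb` expresses that the four algebras form a commuting square. -/
theorem vnEntropy_strong_subadditivity {n a b c : Type} [Fintype n] [DecidableEq n]
    [Fintype a] [DecidableEq a] [Fintype b] [DecidableEq b] [Fintype c] [DecidableEq c]
    {Λ : Matrix a a ℂ →⋆ₐ[ℂ] Matrix n n ℂ} {Λ' : Matrix c c ℂ →⋆ₐ[ℂ] Matrix n n ℂ}
    {κ : Matrix b b ℂ →⋆ₐ[ℂ] Matrix a a ℂ} {ρ : Matrix n n ℂ} {ρa : Matrix a a ℂ}
    {ρb : Matrix b b ℂ} {ρc : Matrix c c ℂ} (hρ : ρ.PosSemidef) (ha : IsMarginal Λ ρ ρa)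
    (hc : IsMarginal Λ' ρ ρc) (hb : IsMarginal κ ρa ρb) (hcb : IsMarginal Λ (Λ' ρc) (κ ρb)) :
    vnEntropy ρ + vnEntropy ρb ≤ vnEntropy ρa + vnEntropy ρc := by
  have hmono := ha.relEntropy_le hcb hρ (map_posSemidef Λ' (hc.posSemidef hρ)) (hc.supportLE_map hρ)
  rw [relEntropy_map hb (ha.isHermitian hρ.1), relEntropy_map hc hρ.1] at hmono
  linarith [le_of_mul_le_mul_right hmono (Real.log_pos one_lt_two)]

end Entropy

section Ampliation

variable {n m c : Type*} [Fintype n] [DecidableEq n] [Fintype m] [DecidableEq m]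
  [Fintype c] [DecidableEq c]

/-- The embedding `Z ↦ Z ⊗ 1` of the matrix algebra of a tensor factor, where the identification
of the index set `n` of the composite system with `m × c` is the equivalence `e`. -/
noncomputable def ampliation (e : n ≃ m × c) : Matrix m m ℂ →⋆ₐ[ℂ] Matrix n n ℂ where
  toFun Z := (Z ⊗ₖ (1 : Matrix c c ℂ)).submatrix e e
  map_one' := by simp
  map_mul' Y Z := by rw [submatrix_mul_equiv, ← mul_kronecker_mul, Matrix.one_mul]
  map_zero' := by simp
  map_add' Y Z := by rw [add_kronecker, submatrix_add]; rfl
  commutes' r := by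
    simp [Algebra.algebraMap_eq_smul_one, smul_kronecker, submatrix_smul]
  map_star' Z := by simp [star_eq_conjTranspose, conjTranspose_kronecker]

/-- The partial trace over the tensor factor indexed by `c`. -/
def partialTrace (e : n ≃ m × c) (ρ : Matrix n n ℂ) : Matrix m m ℂ :=
  of fun x y => ∑ w, ρ (e.symm (x, w)) (e.symm (y, w))

theorem ampliation_apply (e : n ≃ m × c) (Z : Matrix m m ℂ) (x y : n) :
    ampliation e Z x y = if (e x).2 = (e y).2 then Z (e x).1 (e y).1 else 0 := by
  simp [ampliation, one_apply]

theorem isMarginal_partialTrace (e : n ≃ m × c) (ρ : Matrix n n ℂ) :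
    IsMarginal (ampliation e) ρ (partialTrace e ρ) := by
  intro Z
  simp only [trace, diag_apply, mul_apply, partialTrace, of_apply, ampliation_apply,
    ← e.symm.sum_comp, Fintype.sum_prod_type, Equiv.apply_symm_apply, ite_mul, zero_mul,
    Finset.sum_ite_eq, Finset.mem_univ, if_true, Finset.mul_sum]
  exact Finset.sum_congr rfl fun x _ => Finset.sum_comm

end Ampliation

section Splitting

variable {ι : Type*} [DecidableEq ι] {d : ι → Type*}

/-- A basis index of the parties in `v` is a pair of basis indices of the parties in `s` and `u`,
whenever `v` is the disjoint union of `s` and `u`. -/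
def splitEquiv {s u v : Finset ι} (hd : Disjoint s u) (hv : s ∪ u = v) :
    ((i : {j // j ∈ v}) → d i) ≃ ((i : {j // j ∈ s}) → d i) × ((i : {j // j ∈ u}) → d i) where
  toFun x := (fun i => x ⟨i, hv ▸ Finset.mem_union_left u i.2⟩,
    fun i => x ⟨i, hv ▸ Finset.mem_union_right s i.2⟩)
  invFun p i := if hi : i.1 ∈ s then p.1 ⟨i, hi⟩ else
    p.2 ⟨i, (Finset.mem_union.1 (hv ▸ i.2)).resolve_left hi⟩
  left_inv x := by
    ext i
    by_cases hi : i.1 ∈ s <;> simp [hi]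
  right_inv p := by
    ext i
    · simp [i.2]
    · simp [Finset.disjoint_right.1 hd i.2]

variable [∀ i, Fintype (d i)] [∀ i, DecidableEq (d i)]

theorem partialTrace_ampliation_splitEquiv {A B C : Finset ι} (hBA : Disjoint B A)
    (hBC : Disjoint B C) (hAC : Disjoint A C)
    (X : Matrix ((i : {j // j ∈ B ∪ C}) → d i) ((i : {j // j ∈ B ∪ C}) → d i) ℂ) :
    partialTrace (splitEquiv (Finset.disjoint_union_left.2 ⟨hBC, hAC⟩) rfl)
        (ampliation (splitEquiv (Finset.disjoint_union_left.2 ⟨hBA, hAC.symm⟩)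
          (Finset.union_right_comm B C A)) X) =
      ampliation (splitEquiv hBA rfl) (partialTrace (splitEquiv hBC rfl) X) := by
  set fromBA := splitEquiv (d := d) (Finset.disjoint_union_left.2 ⟨hBC, hAC⟩) rfl
  set fromBC := splitEquiv (d := d) (Finset.disjoint_union_left.2 ⟨hBA, hAC.symm⟩)
    (Finset.union_right_comm B C A)
  have hA (x : (i : {j // j ∈ B ∪ A}) → d i) (w : (i : {j // j ∈ C}) → d i) :
      (fromBC (fromBA.symm (x, w))).2 = (splitEquiv hBA rfl x).2 := by
    ext i
    simp [fromBA, fromBC, splitEquiv]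
  have hB (x : (i : {j // j ∈ B ∪ A}) → d i) (w : (i : {j // j ∈ C}) → d i) :
      (fromBC (fromBA.symm (x, w))).1 =
        (splitEquiv hBC rfl).symm ((splitEquiv hBA rfl x).1, w) := by
    ext i
    by_cases hi : i.1 ∈ B
    · simp [fromBA, fromBC, splitEquiv, hi]
    · have hiC : i.1 ∈ C := (Finset.mem_union.1 i.2).resolve_left hi
      simp [fromBA, fromBC, splitEquiv, hi, Finset.disjoint_right.1 hAC hiC]
  ext x y
  simp only [partialTrace, of_apply, ampliation_apply, hA, hB]
  split_ifs <;> simp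

end Splitting

section Parties

variable {ι : Type} [Fintype ι] [DecidableEq ι] {d : ι → Type}
  [∀ i, Fintype (d i)] [∀ i, DecidableEq (d i)]

theorem isMarginal_pTr (ρ : Matrix (∀ i, d i) (∀ i, d i) ℂ) (s : Finset ι) :
    IsMarginal (ampliation (Equiv.piEquivPiSubtypeProd (· ∈ s) d)) ρ (pTr ρ s) :=
  isMarginal_partialTrace _ ρ

theorem ampliation_ampliation_splitEquiv {s u v : Finset ι} (hd : Disjoint s u) (hv : s ∪ u = v)
    (Z : Matrix ((i : {j // j ∈ s}) → d i) ((i : {j // j ∈ s}) → d i) ℂ) :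
    ampliation (Equiv.piEquivPiSubtypeProd (· ∈ v) d) (ampliation (splitEquiv hd hv) Z) =
      ampliation (Equiv.piEquivPiSubtypeProd (· ∈ s) d) Z := by
  subst hv
  ext x y
  have hagree : (∀ i ∉ s, x i = y i) ↔ (∀ i ∉ s ∪ u, x i = y i) ∧ ∀ i ∈ u, x i = y i := by
    have := Finset.disjoint_right.1 hd
    grind
  simp only [ampliation_apply, splitEquiv, Equiv.piEquivPiSubtypeProd, Equiv.coe_fn_mk,
    funext_iff, Subtype.forall, hagree, ite_and]

theorem pTr_eq_partialTrace_pTr {ι : Type} [Fintype ι] [DecidableEq ι] {d : ι → Type}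
    [∀ i, Fintype (d i)] (ρ : Matrix (∀ i, d i) (∀ i, d i) ℂ) {s u v : Finset ι}
    (hd : Disjoint s u) (hv : s ∪ u = v) :
    pTr ρ s = partialTrace (splitEquiv hd hv) (pTr ρ v) := by
  classical
  refine ext_iff_trace_mul_left.2 fun Z => ?_
  rw [← isMarginal_pTr, ← isMarginal_partialTrace, ← isMarginal_pTr,
    ampliation_ampliation_splitEquiv]

theorem Sv_strong_subadditivity {ρ : Matrix (∀ i, d i) (∀ i, d i) ℂ} (hρ : ρ.PosSemidef)
    {A B C : Finset ι} (hBA : Disjoint B A) (hBC : Disjoint B C) (hAC : Disjoint A C) :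
    Sv ρ (B ∪ A ∪ C) + Sv ρ B ≤ Sv ρ (B ∪ A) + Sv ρ (B ∪ C) := by
  have hAB_C := Finset.disjoint_union_left.2 ⟨hBC, hAC⟩
  have hBC_A := Finset.disjoint_union_left.2 ⟨hBA, hAC.symm⟩
  have marginal {s u v : Finset ι} (hd : Disjoint s u) (hv : s ∪ u = v) :
      IsMarginal (ampliation (splitEquiv hd hv)) (pTr ρ v) (pTr ρ s) :=
    pTr_eq_partialTrace_pTr ρ hd hv ▸ isMarginal_partialTrace _ _
  refine vnEntropy_strong_subadditivity ((isMarginal_pTr ρ _).posSemidef hρ)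
    (marginal hAB_C rfl) (marginal hBC_A (Finset.union_right_comm B C A)) (marginal hBA rfl) ?_
  rw [pTr_eq_partialTrace_pTr ρ hBC rfl, ← partialTrace_ampliation_splitEquiv hBA hBC hAC]
  exact isMarginal_partialTrace _ _

theorem Sv_union_add_Sv_inter_le {ρ : Matrix (∀ i, d i) (∀ i, d i) ℂ} (hρ : ρ.PosSemidef)
    (s t : Finset ι) : Sv ρ (s ∪ t) + Sv ρ (s ∩ t) ≤ Sv ρ s + Sv ρ t := by
  have hssa := Sv_strong_subadditivity hρ (Finset.disjoint_sdiff_inter s t).symm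
    (Finset.inter_comm t s ▸ (Finset.disjoint_sdiff_inter t s).symm) disjoint_sdiff_sdiff
  have hs : s ∩ t ∪ s \ t = s := by grind
  have ht : s ∩ t ∪ t \ s = t := by grind
  rwa [hs, ht, Finset.union_sdiff_self_eq_union] at hssa

theorem Sv_empty {ρ : Matrix (∀ i, d i) (∀ i, d i) ℂ} (hρ : IsDensity ρ) : Sv ρ ∅ = 0 :=
  vnEntropy_of_unique
    ⟨(isMarginal_pTr ρ ∅).posSemidef hρ.1, (isMarginal_pTr ρ ∅).trace_eq ▸ hρ.2⟩

end Parties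

section Submodular

variable {ι : Type*} [DecidableEq ι] {P Q : Finset (Finset ι)} {X Y : Finset ι}
  {f : Finset ι → ℝ}

theorem sup_id_union_sup_id_sdiff (hQP : Q ⊆ P) : Q.sup id ∪ (P \ Q).sup id = P.sup id := by
  rw [← Finset.sup_eq_union, ← Finset.sup_union, Finset.union_sdiff_of_subset hQP]

/-- Submodularity of a real-valued function on the finite subsets of `ι`. -/
def IsSubmodular (f : Finset ι → ℝ) : Prop := ∀ s t, f (s ∪ t) + f (s ∩ t) ≤ f s + f t

/-- The amount by which `f` fails to be additive on the partition `P`; for `f = Sv ρ` it is the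
mutual information `MI ρ P`. -/
def excess (f : Finset ι → ℝ) (P : Finset (Finset ι)) : ℝ := ∑ X ∈ P, f X - f (P.sup id)

theorem excess_insert (hX : X.Nonempty) (hd : Disjoint X (P.sup id)) :
    excess f (insert X P) = f X + ∑ Y ∈ P, f Y - f (X ∪ P.sup id) := by
  have hXP : X ∉ P := fun hmem =>
    hX.ne_empty (disjoint_self.1 (Finset.disjoint_sup_right.1 hd hmem))
  rw [excess, Finset.sum_insert hXP, Finset.sup_insert, id, Finset.sup_eq_union]

namespace IsSubmodular

theorem le_add_of_disjoint (hf : IsSubmodular f) (hf0 : f ∅ = 0) (hd : Disjoint X Y) :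
    f (X ∪ Y) ≤ f X + f Y := by
  simpa only [Finset.disjoint_iff_inter_eq_empty.1 hd, hf0, add_zero] using hf X Y

theorem add_le_add_of_subset (hf : IsSubmodular f) {s t u : Finset ι} (hts : t ⊆ s)
    (hd : Disjoint s u) : f (s ∪ u) + f t ≤ f s + f (t ∪ u) := by
  have hunion : s ∪ (t ∪ u) = s ∪ u := by
    rw [← Finset.union_assoc, Finset.union_eq_left.2 hts]
  have hinter : s ∩ (t ∪ u) = t := by
    rw [Finset.inter_union_distrib_left, Finset.disjoint_iff_inter_eq_empty.1 hd,
      Finset.union_empty, Finset.inter_eq_right.2 hts]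
  simpa only [hunion, hinter] using hf s (t ∪ u)

end IsSubmodular

end Submodular

section Coarsening

variable {ι : Type} [DecidableEq ι] {P Q : Finset (Finset ι)} {X Y : Finset ι}

namespace IsPartition

theorem subset (hP : IsPartition P) (hQP : Q ⊆ P) : IsPartition Q :=
  ⟨fun X hX => hP.1 X (hQP hX), hP.2.subset (Finset.coe_subset.2 hQP)⟩

theorem disjoint_sup_sdiff (hP : IsPartition P) (hQP : Q ⊆ P) :
    Disjoint (Q.sup id) ((P \ Q).sup id) := by
  simp only [Finset.disjoint_sup_left, Finset.disjoint_sup_right, Finset.mem_sdiff]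
  exact fun Y hY X hX => hP.2 (hQP hX) hY.1 fun hXY => hY.2 (hXY ▸ hX)

theorem disjoint_sup_erase (hP : IsPartition P) (hX : X ∈ P) :
    Disjoint X ((P.erase X).sup id) := by
  simpa [Finset.sdiff_singleton_eq_erase] using
    hP.disjoint_sup_sdiff (Finset.singleton_subset_iff.2 hX)

theorem insert (hP : IsPartition P) (hX : X.Nonempty) (hd : Disjoint X (P.sup id)) :
    IsPartition (insert X P) := by
  refine ⟨Finset.forall_mem_insert _ _ _ |>.2 ⟨hX, hP.1⟩, ?_⟩
  rw [Finset.coe_insert]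
  exact hP.2.insert fun Y hY _ => Finset.disjoint_sup_right.1 hd hY

theorem nonempty_sup (hP : IsPartition P) (hne : P.Nonempty) : (P.sup id).Nonempty := by
  obtain ⟨X, hX⟩ := hne
  exact (hP.1 X hX).mono (Finset.le_sup (f := id) hX)

end IsPartition

theorem CoarserStep.isPartition (h : CoarserStep P Q) (hP : IsPartition P) : IsPartition Q := by
  cases h with
  | discard hQP _ => exact hP.subset hQP
  | merge T hT hne =>
    exact (hP.subset Finset.sdiff_subset).insert ((hP.subset hT).nonempty_sup hne)
      (hP.disjoint_sup_sdiff hT)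
  | shrink X X' hX _ hsub hne =>
    exact (hP.subset (Finset.erase_subset X P)).insert hne
      ((hP.disjoint_sup_erase hX).mono_left hsub)

namespace IsSubmodular

variable {f : Finset ι → ℝ}

theorem excess_nonneg (hf : IsSubmodular f) (hf0 : f ∅ = 0) (hP : IsPartition P) :
    0 ≤ excess f P := by
  induction P using Finset.induction_on with
  | empty => simp [excess, hf0]
  | insert X P hX ih =>
    have hd : Disjoint X (P.sup id) := by
      simpa only [Finset.erase_insert hX] using hP.disjoint_sup_erase (P.mem_insert_self X)
    have hnonneg := ih (hP.subset (Finset.subset_insert X P))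
    rw [excess_insert (hP.1 X (P.mem_insert_self X)) hd]
    rw [excess] at hnonneg
    linarith [hf.le_add_of_disjoint hf0 hd]

theorem excess_discard_le (hf : IsSubmodular f) (hf0 : f ∅ = 0) (hP : IsPartition P)
    (hQP : Q ⊆ P) : excess f Q ≤ excess f P := by
  have hdiscarded := hf.excess_nonneg hf0 (hP.subset (Q := P \ Q) Finset.sdiff_subset)
  have hunion := hf.le_add_of_disjoint hf0 (hP.disjoint_sup_sdiff hQP)
  rw [sup_id_union_sup_id_sdiff hQP] at hunion
  simp only [excess] at hdiscarded ⊢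
  linarith [Finset.sum_sdiff (f := f) hQP]

theorem excess_merge_le (hf : IsSubmodular f) (hf0 : f ∅ = 0) (hP : IsPartition P)
    (hQP : Q ⊆ P) (hQ : Q.Nonempty) : excess f (insert (Q.sup id) (P \ Q)) ≤ excess f P := by
  have hmerged := hf.excess_nonneg hf0 (hP.subset hQP)
  rw [excess_insert ((hP.subset hQP).nonempty_sup hQ) (hP.disjoint_sup_sdiff hQP),
    sup_id_union_sup_id_sdiff hQP]
  simp only [excess] at hmerged ⊢
  linarith [Finset.sum_sdiff (f := f) hQP]

theorem excess_shrink_le (hf : IsSubmodular f) (hP : IsPartition P) (hX : X ∈ P) (hYX : Y ⊆ X)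
    (hY : Y.Nonempty) : excess f (insert Y (P.erase X)) ≤ excess f P := by
  have hd := hP.disjoint_sup_erase hX
  nth_rw 2 [← Finset.insert_erase hX]
  rw [excess_insert hY (hd.mono_left hYX), excess_insert (hP.1 X hX) hd]
  linarith [hf.add_le_add_of_subset hYX hd]

theorem excess_le_of_coarserStep (hf : IsSubmodular f) (hf0 : f ∅ = 0) (hP : IsPartition P)
    (h : CoarserStep P Q) : excess f Q ≤ excess f P := by
  cases h with
  | discard hQP _ => exact hf.excess_discard_le hf0 hP hQP
  | merge T hT hne => exact hf.excess_merge_le hf0 hP hT hne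
  | shrink X X' hX _ hsub hne => exact hf.excess_shrink_le hP hX hsub hne

theorem excess_le_of_coarser (hf : IsSubmodular f) (hf0 : f ∅ = 0) (hP : IsPartition P)
    (h : Coarser P Q) : excess f Q ≤ excess f P := by
  induction h using Relation.ReflTransGen.head_induction_on with
  | refl => exact le_rfl
  | head hstep _ ih =>
    exact (ih (hstep.isPartition hP)).trans (hf.excess_le_of_coarserStep hf0 hP hstep)

end IsSubmodular

end Coarsening

/-- If the partition `Y₁|⋯|Y_l` of (a subsystem of) an `n`-partite system is
coarser than the partition `X₁|⋯|X_k`, then for every density operator `ρ`,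
`I(X₁:⋯:X_k) ≥ I(Y₁:⋯:Y_l)`. -/
theorem mutualInfo_mono_of_coarser
    {ι : Type} [Fintype ι] [DecidableEq ι] {d : ι → Type}
    [∀ i, Fintype (d i)] [∀ i, DecidableEq (d i)]
    (ρ : Matrix (∀ i, d i) (∀ i, d i) ℂ) (hρ : IsDensity ρ)
    (P Q : Finset (Finset ι)) (hP : IsPartition P) (hPQ : Coarser P Q) :
    MI ρ Q ≤ MI ρ P := by
  have hsubmodular : IsSubmodular (Sv ρ) := Sv_union_add_Sv_inter_le hρ.1
  exact hsubmodular.excess_le_of_coarser (Sv_empty hρ) hP hPQ
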